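/- Let G be a finite group with trivial Frattini subgroup, and let V be a chief factor of G and U a nontrivial normal subgroup of G with I_G(V) = R_G(V) × U. Then C(G) ≤ C(G/U) + Σ_{k=0}^{∞} P*_{G,V}(k). -/

import Mathlib

/-!
Definitions supporting the formalization of
"An upper bound on the Chebotarev invariant of a finite group" (Lucchini–Tracey).
-/

open scoped BigOperators

namespace ChebotarevPaper

/-- A `k`-tuple of elements of `G` invariably generates `G` if, replacing each entry by an
arbitrary conjugate, the resulting elements always generate `G`. -/
def InvGen (G : Type*) [Group G] {k : ℕ} (f : Fin k → G) : Prop :=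
  ∀ c : Fin k → G, Subgroup.closure (Set.range fun i => c i * f i * (c i)⁻¹) = ⊤

/-- The probability that `k` independent uniformly random elements of `G` invariably
generate `G`. -/
noncomputable def probInvGen (G : Type*) [Group G] (k : ℕ) : ℝ :=
  Nat.card {f : Fin k → G // InvGen G f} / (Nat.card G : ℝ) ^ k

/-- The Chebotarev invariant `C(G)`:  `C(G) = Σ_{k ≥ 0} (1 − P_I(G,k))`, where `P_I(G,k)`
is the probability that `k` independent uniformly random elements of `G` invariably
generate `G`. -/
noncomputable def cheb (G : Type*) [Group G] : ℝ :=
  ∑' k : ℕ, (1 - probInvGen G k)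

/-- The probability that `k` independent uniformly random elements of `G` generate `G`. -/
noncomputable def probGen (G : Type*) [Group G] (k : ℕ) : ℝ :=
  Nat.card {f : Fin k → G // Subgroup.closure (Set.range f) = ⊤} / (Nat.card G : ℝ) ^ k

/-- The expected number of uniformly random elements of `G` needed to generate `G`. -/
noncomputable def expectedGen (G : Type*) [Group G] : ℝ :=
  ∑' k : ℕ, (1 - probGen G k)

/-- `d(G)`: the minimal number of generators of `G`. -/
noncomputable def minGen (G : Type*) [Group G] : ℕ :=
  sInf {n | ∃ f : Fin n → G, Subgroup.closure (Set.range f) = ⊤}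

/-- `σ` has the defining property of the constant `σ = 2.118456563…` of Pomerance:
for every finite group `X`, the expected number of uniformly random elements needed to
generate `X` is at most `d(X) + σ`. -/
def IsPomeranceConst (σ : ℝ) : Prop :=
  ∀ (X : Type) [Group X] [Finite X], expectedGen X ≤ minGen X + σ

variable (G : Type*) [Group G]

/-- `(X, Y)` is a chief factor of `G`:  both are normal in `G`, `Y < X`, and no normal
subgroup of `G` lies strictly between them (i.e. `X/Y` is a minimal normal subgroup of
`G/Y`). -/
def IsChiefFactorPair (X Y : Subgroup G) : Prop :=
  X.Normal ∧ Y.Normal ∧ Y < X ∧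
    ∀ N : Subgroup G, N.Normal → Y ≤ N → N ≤ X → N = Y ∨ N = X

/-- The chief factor `X/Y` is complemented: there is `U ≤ G` with `UX = G` and
`U ⊓ X = Y`. -/
def IsComplementedFactor (X Y : Subgroup G) : Prop :=
  ∃ U : Subgroup G, U ⊔ X = ⊤ ∧ U ⊓ X = Y

/-- The chief factor `X/Y` is a Frattini chief factor, i.e. `X/Y ≤ Frat(G/Y)`;
equivalently (and this is how we state it), `X/Y` is abelian and has no complement
in `G`. -/
def IsFrattiniFactor (X Y : Subgroup G) : Prop :=
  (∀ a b : G, a ∈ X → b ∈ X → a * b * a⁻¹ * b⁻¹ ∈ Y) ∧ ¬ IsComplementedFactor G X Y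

/-- The chief factor `X/Y` is central in `G`, i.e. `X/Y ≤ Z(G/Y)`. -/
def IsCentralFactor (X Y : Subgroup G) : Prop :=
  ∀ g x : G, x ∈ X → g * x * g⁻¹ * x⁻¹ ∈ Y

/-- The `G`-group `V` (a group with an action `a : G →* MulAut V` of `G` by automorphisms)
is `G`-isomorphic to the chief factor `X/Y` (on which `G` acts by conjugation): there is a
surjective homomorphism `X →* V` with kernel `Y` transforming conjugation by `g ∈ G` into
the action of `g` on `V`. -/
def RepresentsFactor {V : Type*} [Group V] (a : G →* MulAut V) (X Y : Subgroup G) : Prop :=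
  ∃ f : X →* V, Function.Surjective f ∧ (∀ x : X, f x = 1 ↔ (x : G) ∈ Y) ∧
    ∀ (g : G) (x y : X), (y : G) = g * (x : G) * g⁻¹ → f y = a g (f x)

/-- Two `G`-groups `(V₁, a₁)`, `(V₂, a₂)` are `G`-equivalent: there are isomorphisms
`φ : V₁ ≃* V₂` and `Φ : V₁ ⋊ G ≃* V₂ ⋊ G` making the natural diagram of the two
extensions `1 → Vᵢ → Vᵢ ⋊ G → G → 1` commute. -/
def GEquiv {V₁ V₂ : Type*} [Group V₁] [Group V₂]
    (a₁ : G →* MulAut V₁) (a₂ : G →* MulAut V₂) : Prop :=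
  ∃ (φ : V₁ ≃* V₂) (Φ : (V₁ ⋊[a₁] G) ≃* (V₂ ⋊[a₂] G)),
    (∀ v : V₁, Φ (SemidirectProduct.inl v) = SemidirectProduct.inl (φ v)) ∧
    ∀ x, (Φ x).right = x.right

/-- `G`-isomorphism of `G`-groups. -/
def GIso {V₁ V₂ : Type*} [Group V₁] [Group V₂]
    (a₁ : G →* MulAut V₁) (a₂ : G →* MulAut V₂) : Prop :=
  ∃ φ : V₁ ≃* V₂, ∀ (g : G) (v : V₁), φ (a₁ g v) = a₂ g (φ v)

/-- `N` is a minimal normal subgroup of `G`. -/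
def IsMinimalNormal (N : Subgroup G) : Prop :=
  N.Normal ∧ N ≠ ⊥ ∧ ∀ M : Subgroup G, M.Normal → M ≠ ⊥ → M ≤ N → M = N

/-- The socle of `G`: the subgroup generated by all minimal normal subgroups of `G`. -/
def socle : Subgroup G := sSup {N : Subgroup G | IsMinimalNormal G N}

instance socle_normal : (socle G).Normal := by
  constructor
  intro n hn g
  have h : socle G ≤ (socle G).comap (MulAut.conj g).toMonoidHom := by
    rw [socle]
    apply sSup_le
    intro N hN x hx
    have h1 : (MulAut.conj g).toMonoidHom x ∈ N := by
      simpa [MulAut.conj_apply] using hN.1.conj_mem x hx g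
    exact Subgroup.mem_comap.2 (le_sSup hN h1)
  have h2 := h hn
  simpa [MulAut.conj_apply] using h2

/-- The action of `G` (by conjugation, through `f : G →* Q`) on the socle of `Q`. -/
def socAct {Q : Type*} [Group Q] (f : G →* Q) : G →* MulAut (socle Q) :=
  MulAut.conjNormal.comp f

/-- The diagonal action of `G` on `V × V` induced by an action on `V`. -/
def prodAct {V : Type*} [Group V] (a : G →* MulAut V) : G →* MulAut (V × V) where
  toFun g := MulEquiv.prodCongr (a g) (a g)
  map_one' := by
    ext x <;> simp [MulEquiv.prodCongr, MulAut.one_apply]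
  map_mul' g h := by
    ext x <;> simp [MulEquiv.prodCongr, MulAut.mul_apply]

/-- The diagonal action of `H` on `V^u` induced by an action on `V`. -/
def diagAct (H : Type*) [Group H] {V : Type*} [Group V] (b : H →* MulAut V) (u : ℕ) :
    H →* MulAut (Fin u → V) where
  toFun g := MulEquiv.piCongrRight fun _ => b g
  map_one' := by
    ext x i; simp
  map_mul' g h := by
    ext x i; simp [MulAut.mul_apply]

variable {G}

/-- The elements `gs 0, …, gs (k-1)` of `G` satisfy the `V`-property in `G`: they all lie
in the union of the `G`-conjugates of some maximal subgroup `M` of `G` such that the socle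
of `G/core_G(M)` is `G`-equivalent to `V` or to `V × V`. -/
def SatisfyVProperty {V : Type*} [Group V] (a : G →* MulAut V) {k : ℕ}
    (gs : Fin k → G) : Prop :=
  ∃ M : Subgroup G, IsCoatom M ∧
    (GEquiv G (socAct G (QuotientGroup.mk' M.normalCore)) a ∨
      GEquiv G (socAct G (QuotientGroup.mk' M.normalCore)) (prodAct G a)) ∧
    ∀ i, ∃ x : G, x * gs i * x⁻¹ ∈ M

/-- `P*_{G,V}(k)`: the probability that `k` independent uniformly random elements of `G`
satisfy the `V`-property in `G`. -/
noncomputable def pStar {V : Type*} [Group V] (a : G →* MulAut V) (k : ℕ) : ℝ :=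
  Nat.card {gs : Fin k → G // SatisfyVProperty a gs} / (Nat.card G : ℝ) ^ k

/-- The collection of normal subgroups `N` of `G` such that `G/N` is isomorphic to the
monolithic primitive group `L_V` associated to `V` (that is, `V ⋊ (G/C_G(V))` if `V` is
abelian and `G/C_G(V)` otherwise; here `C_G(V)` is the kernel of the action of `G` on
`V`) and the socle of `G/N` is `G`-equivalent to `V`. -/
def crownNormals {V : Type*} [Group V] (a : G →* MulAut V) : Set (Subgroup G) :=
  {N | ∃ _ : N.Normal,
    ((∀ x y : V, x * y = y * x) →
      Nonempty ((G ⧸ N) ≃* (V ⋊[QuotientGroup.kerLift a] (G ⧸ a.ker)))) ∧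
    (¬ (∀ x y : V, x * y = y * x) → Nonempty ((G ⧸ N) ≃* (G ⧸ a.ker))) ∧
    GEquiv G (socAct G (QuotientGroup.mk' N)) a}

/-- `R_G(V)`: the intersection of all normal subgroups `N` of `G` with `G/N ≅ L_V` and
`soc(G/N)` `G`-equivalent to `V`. -/
def crownRadical {V : Type*} [Group V] (a : G →* MulAut V) : Subgroup G :=
  sInf (crownNormals a)

instance crownRadical_normal {V : Type*} [Group V] (a : G →* MulAut V) :
    (crownRadical a).Normal := by
  constructor
  intro n hn g
  rw [crownRadical, Subgroup.mem_sInf] at hn ⊢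
  intro p hp
  obtain ⟨hpN, hrest⟩ := hp
  exact hpN.conj_mem n (hn p ⟨hpN, hrest⟩) g

/-- `I_G(V)`: the preimage in `G` of the socle of `G/R_G(V)`; the `V`-crown of `G` is
`I_G(V)/R_G(V)`. -/
def crownSocle {V : Type*} [Group V] (a : G →* MulAut V) : Subgroup G :=
  (socle (G ⧸ crownRadical a)).comap (QuotientGroup.mk' (crownRadical a))

/-- A chief series of `G`: a chain `⊥ = N_0 < N_1 < … < N_len = ⊤` of normal subgroups
of `G` in which each factor `N_{i+1}/N_i` is a chief factor of `G`. -/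
structure ChiefSeries (G : Type*) [Group G] where
  len : ℕ
  ser : Fin (len + 1) → Subgroup G
  bot_eq : ser 0 = ⊥
  top_eq : ser (Fin.last len) = ⊤
  chief : ∀ i : Fin len, IsChiefFactorPair G (ser i.succ) (ser i.castSucc)

/-- `δ_V(G)` (for a `G`-module `V`): the number of complemented factors in the chief
series `S` of `G` which are `G`-isomorphic to `V`. -/
noncomputable def deltaIso {V : Type*} [Group V] (a : G →* MulAut V)
    (S : ChiefSeries G) : ℕ :=
  Nat.card {i : Fin S.len //
    IsComplementedFactor G (S.ser i.succ) (S.ser i.castSucc) ∧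
    RepresentsFactor G a (S.ser i.succ) (S.ser i.castSucc)}

/-- The chief factor `X/Y` of `G` is `G`-equivalent to the `G`-group `(V, a)`. -/
def FactorGEquiv (X Y : Subgroup G) {V : Type*} [Group V] (a : G →* MulAut V) : Prop :=
  ∃ (W : Type) (_ : Group W) (b : G →* MulAut W),
    RepresentsFactor G b X Y ∧ GEquiv G b a

/-- `δ_V(G)` (for a `G`-group `V`): the number of non-Frattini factors in the chief
series `S` of `G` which are `G`-equivalent to `V`. -/
noncomputable def deltaEquiv {V : Type*} [Group V] (a : G →* MulAut V)
    (S : ChiefSeries G) : ℕ :=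
  Nat.card {i : Fin S.len //
    ¬ IsFrattiniFactor G (S.ser i.succ) (S.ser i.castSucc) ∧
    FactorGEquiv (S.ser i.succ) (S.ser i.castSucc) a}

/-- Bundled `G`-group: a group together with an action of `G` by automorphisms. -/
structure GGroup (G : Type) [Group G] : Type 1 where
  carrier : Type
  [grp : Group carrier]
  act : G →* MulAut carrier

attribute [instance] GGroup.grp

/-- The action `b` of `H` on `V` is irreducible: `V` is nontrivial and has no proper
nontrivial (normal) `H`-invariant subgroup. -/
def IsIrreducibleGGroup (H : Type*) [Group H] {V : Type*} [Group V]
    (b : H →* MulAut V) : Prop :=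
  Nontrivial V ∧
    ∀ W : Subgroup V, W.Normal → (∀ (h : H) (v : V), v ∈ W → b h v ∈ W) → W = ⊥ ∨ W = ⊤

/-- The `H`-equivariant endomorphisms of `V` (for `H`-modules `V` this is
`End_H(V)`). -/
def EquivEnd (H : Type*) [Group H] {V : Type*} [Group V] (b : H →* MulAut V) :=
  {f : V →* V // ∀ (h : H) (v : V), f (b h v) = b h (f v)}

/-- `q_V := |End_H(V)|`. -/
noncomputable def endCard (H : Type*) [Group H] {V : Type*} [Group V]
    (b : H →* MulAut V) : ℕ :=
  Nat.card (EquivEnd H b)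

/-- `n_V := dim_{End_H(V)} V`, characterised by `|End_H(V)| ^ n_V = |V|` (for a finite
irreducible `H`-module `V`, `End_H(V)` is a field and `V` a vector space over it). -/
noncomputable def dimEnd (H : Type*) [Group H] {V : Type*} [Group V]
    (b : H →* MulAut V) : ℕ :=
  sInf {n : ℕ | endCard H b ^ n = Nat.card V}

/-- The set of derivations `ζ : H → V` (satisfying `ζ(h₁h₂) = ζ(h₁)^{h₂} · ζ(h₂)`). -/
def DerSet (H : Type*) [Group H] {V : Type*} [Group V] (b : H →* MulAut V) :
    Set (H → V) :=
  {ζ | ∀ h₁ h₂ : H, ζ (h₁ * h₂) = b h₂ (ζ h₁) * ζ h₂}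

/-- The set of inner derivations `h ↦ [h,v] = v^h · v⁻¹`. -/
def IderSet (H : Type*) [Group H] {V : Type*} [Group V] (b : H →* MulAut V) :
    Set (H → V) :=
  {ζ | ∃ v : V, ∀ h : H, ζ h = b h v * v⁻¹}

/-- `m := dim_{End_H(V)} H¹(H,V)` where `H¹(H,V) = Der(H,V)/Ider(H,V)`, characterised by
`|End_H(V)| ^ m · |Ider(H,V)| = |Der(H,V)|`. -/
noncomputable def h1Dim (H : Type*) [Group H] {V : Type*} [Group V]
    (b : H →* MulAut V) : ℕ :=
  sInf {m : ℕ | endCard H b ^ m * Nat.card (IderSet H b) = Nat.card (DerSet H b)}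

/-- The probability that a uniformly random element of `H` fixes a nonzero (i.e.
non-identity) vector of `V`. -/
noncomputable def fixProb (H : Type*) [Group H] {V : Type*} [Group V]
    (b : H →* MulAut V) : ℝ :=
  Nat.card {h : H // ∃ v : V, v ≠ 1 ∧ b h v = v} / (Nat.card H : ℝ)

/-- `A` is a set of representatives for the irreducible `G`-modules which are
`G`-isomorphic to a chief factor of `G` satisfying `P`:  every member of `A` is an
irreducible abelian `G`-group `G`-isomorphic to some chief factor satisfying `P`, and
every chief factor of `G` satisfying `P` is `G`-isomorphic to exactly one member
of `A`. -/
def IsModuleRepSet {G : Type} [Group G] (P : Subgroup G → Subgroup G → Prop)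
    (A : Finset (GGroup G)) : Prop :=
  (∀ V ∈ A, (∀ x y : V.carrier, x * y = y * x) ∧ IsIrreducibleGGroup G V.act ∧
      ∃ X Y : Subgroup G, IsChiefFactorPair G X Y ∧ P X Y ∧ RepresentsFactor G V.act X Y) ∧
  ∀ X Y : Subgroup G, IsChiefFactorPair G X Y → P X Y →
    ∃! V : GGroup G, V ∈ A ∧ RepresentsFactor G V.act X Y

/-- `A` is a set of representatives for the irreducible `G`-groups which are
`G`-equivalent to a chief factor of `G` satisfying `P`. -/
def IsGGroupRepSet {G : Type} [Group G] (P : Subgroup G → Subgroup G → Prop)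
    (A : Finset (GGroup G)) : Prop :=
  (∀ V ∈ A, IsIrreducibleGGroup G V.act ∧
      ∃ X Y : Subgroup G, IsChiefFactorPair G X Y ∧ P X Y ∧ FactorGEquiv X Y V.act) ∧
  ∀ X Y : Subgroup G, IsChiefFactorPair G X Y → P X Y →
    ∃! V : GGroup G, V ∈ A ∧ FactorGEquiv X Y V.act

/-!
Suppose that `k` elements of `G` do not invariably generate it, so that each of them has a
conjugate in a common maximal subgroup `M`. If `U ≤ M`, then their images do not invariably
generate `G/U`. Otherwise `G/core(M)` is a primitive group. As `R_G(V) ∩ U` lies in the Frattini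
subgroup, hence in `M`, a normal subgroup of `G` inside `U`, minimal subject to not lying in `M`,
maps onto some `soc(G/N) ~ V` with the same kernel as modulo `core(M)`, so `G/core(M)` has a
minimal normal subgroup `G`-equivalent to `V`. A primitive group has at most two minimal normal
subgroups, and when there are two, both are complements of a point stabilizer and therefore
`G`-equivalent. So the socle of `G/core(M)` is `G`-equivalent to `V` or `V × V`, and the `k`
elements satisfy the `V`-property.

The union bound then compares the failure probabilities for each `k`. Summing over `k` is legitimate
because the series converge: the conjugates of a proper subgroup do not cover a finite group.
-/

/-! ### Equivalence of `G`-groups -/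

section GEquiv

variable {V V₁ V₂ V₃ : Type*} [Group V] [Group V₁] [Group V₂] [Group V₃]
  {a : G →* MulAut V} {a₁ : G →* MulAut V₁} {a₂ : G →* MulAut V₂} {a₃ : G →* MulAut V₃}

theorem GEquiv.exists_cocycle (h : GEquiv G a₁ a₂) :
    ∃ (φ : V₁ ≃* V₂) (β : G → V₂), (∀ g h, β (g * h) = β g * a₂ g (β h)) ∧
      ∀ g v, φ (a₁ g v) = β g * a₂ g (φ v) * (β g)⁻¹ := by
  obtain ⟨φ, Φ, hΦinl, hΦright⟩ := h
  refine ⟨φ, fun g => (Φ (.inr g)).left, fun g h => ?_, fun g v => ?_⟩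
  · simp [SemidirectProduct.mul_left, hΦright]
  · have hconj : (.inl (a₁ g v) * .inr g : V₁ ⋊[a₁] G) = .inr g * .inl v := by ext <;> simp
    have hleft := congrArg (fun x => (Φ x).left) hconj
    simp only [map_mul, SemidirectProduct.mul_left, hΦinl, hΦright, SemidirectProduct.left_inl,
      SemidirectProduct.right_inl, SemidirectProduct.right_inr, map_one, MulAut.one_apply]
      at hleft
    exact eq_mul_inv_of_mul_eq hleft

theorem gEquiv_of_cocycle (φ : V₁ ≃* V₂) (β : G → V₂)
    (hβ : ∀ g h, β (g * h) = β g * a₂ g (β h))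
    (hφ : ∀ g v, φ (a₁ g v) = β g * a₂ g (φ v) * (β g)⁻¹) : GEquiv G a₁ a₂ := by
  have hβ_one : β 1 = 1 := by simpa using hβ 1 1
  let Φ : (V₁ ⋊[a₁] G) ≃ (V₂ ⋊[a₂] G) :=
    { toFun := fun x => ⟨φ x.left * β x.right, x.right⟩
      invFun := fun x => ⟨φ.symm (x.left * (β x.right)⁻¹), x.right⟩
      left_inv := fun x => by ext <;> simp
      right_inv := fun x => by ext <;> simp }
  have hΦ_mul (x y : V₁ ⋊[a₁] G) : Φ (x * y) = Φ x * Φ y := by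
    ext <;> simp [Φ, hβ, hφ, mul_assoc]
  have hΦ_inl (v : V₁) : Φ (.inl v) = .inl (φ v) := by ext <;> simp [Φ, hβ_one]
  exact ⟨φ, MulEquiv.mk' Φ hΦ_mul, hΦ_inl, fun _ => rfl⟩

theorem GIso.gEquiv (h : GIso G a₁ a₂) : GEquiv G a₁ a₂ := by
  obtain ⟨φ, hφ⟩ := h
  exact gEquiv_of_cocycle φ 1 (by simp) (by simpa using hφ)

theorem GEquiv.trans (h : GEquiv G a₁ a₂) (h' : GEquiv G a₂ a₃) : GEquiv G a₁ a₃ := by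
  obtain ⟨φ, Φ, hinl, hright⟩ := h
  obtain ⟨φ', Φ', hinl', hright'⟩ := h'
  exact ⟨φ.trans φ', Φ.trans Φ', fun v => by simp [hinl, hinl'],
    fun x => by simp [hright, hright']⟩

theorem RepresentsFactor.gIso {X Y : Subgroup G} [hX : X.Normal] (h₁ : RepresentsFactor G a₁ X Y)
    (h₂ : RepresentsFactor G a₂ X Y) : GIso G a₁ a₂ := by
  obtain ⟨f₁, hsurj₁, hker₁, hact₁⟩ := h₁
  obtain ⟨f₂, hsurj₂, hker₂, hact₂⟩ := h₂
  have hker : f₁.ker = f₂.ker := by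
    ext x
    rw [MonoidHom.mem_ker, MonoidHom.mem_ker, hker₁, hker₂]
  let φ : V₁ ≃* V₂ := (QuotientGroup.liftEquiv f₁.ker hsurj₁ rfl).symm.trans
    (QuotientGroup.liftEquiv f₁.ker hsurj₂ hker)
  have hφ (x : X) : φ (f₁ x) = f₂ x :=
    congrArg (QuotientGroup.liftEquiv f₁.ker hsurj₂ hker)
      ((MulEquiv.symm_apply_eq _).2 rfl : _ = (x : X ⧸ f₁.ker))
  refine ⟨φ, fun g v => ?_⟩
  obtain ⟨x, rfl⟩ := hsurj₁ v
  let y : X := ⟨g * x * g⁻¹, hX.conj_mem x x.2 g⟩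
  rw [← hact₁ g x y rfl, hφ, hφ, hact₂ g x y rfl]

theorem RepresentsFactor.isIrreducibleGGroup {X Y : Subgroup G} (hrep : RepresentsFactor G a X Y)
    (hchief : IsChiefFactorPair G X Y) : IsIrreducibleGGroup G a := by
  obtain ⟨hX, -, hlt, hmin⟩ := hchief
  obtain ⟨f, hsurj, hker, hact⟩ := hrep
  obtain ⟨x, hxX, hxY⟩ := SetLike.exists_of_lt hlt
  refine ⟨⟨f ⟨x, hxX⟩, 1, fun h => hxY ((hker _).1 h)⟩, fun W _ hW => ?_⟩
  have hnormal : ((W.comap f).map X.subtype).Normal := by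
    refine ⟨?_⟩
    rintro _ ⟨x, hxW, rfl⟩ g
    let y : X := ⟨g * x * g⁻¹, hX.conj_mem x x.2 g⟩
    have hyW : f y ∈ W := hact g x y rfl ▸ hW g _ hxW
    exact ⟨y, hyW, rfl⟩
  have hYle : Y ≤ (W.comap f).map X.subtype := fun y hy =>
    ⟨⟨y, hlt.le hy⟩, Subgroup.mem_comap.2 ((hker ⟨y, hlt.le hy⟩).2 hy ▸ W.one_mem), rfl⟩
  have hW_map : W = (((W.comap f).map X.subtype).comap X.subtype).map f := by
    rw [Subgroup.comap_map_eq_self_of_injective X.subtype_injective,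
      Subgroup.map_comap_eq_self_of_surjective hsurj]
  rw [hW_map]
  refine (hmin _ hnormal hYle (Subgroup.map_subtype_le _)).imp (fun h => ?_) fun h => ?_
  · rw [h, Subgroup.map_eq_bot_iff]
    exact fun y hy => (hker y).2 hy
  · rw [h]
    change (X.subgroupOf X).map f = ⊤
    rw [Subgroup.subgroupOf_self, Subgroup.map_top_of_surjective f hsurj]

theorem GEquiv.isIrreducibleGGroup (h : GEquiv G a₁ a₂) (h₂ : IsIrreducibleGGroup G a₂) :
    IsIrreducibleGGroup G a₁ := by
  obtain ⟨φ, β, -, hφ⟩ := h.exists_cocycle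
  obtain ⟨_, hsimple⟩ := h₂
  refine ⟨φ.toEquiv.nontrivial, fun W hW hinv => ?_⟩
  have hnormal : (W.map φ.toMonoidHom).Normal := hW.map _ φ.surjective
  have hinv_map : ∀ g, ∀ v ∈ W.map φ.toMonoidHom, a₂ g v ∈ W.map φ.toMonoidHom := by
    rintro g _ ⟨w, hw, rfl⟩
    have hconj := hnormal.conj_mem _ ⟨_, hinv g w hw, hφ g w⟩ (β g)⁻¹
    simpa [mul_assoc] using hconj
  refine (hsimple _ hnormal hinv_map).imp (fun h => ?_) fun h => ?_
  · exact (Subgroup.map_eq_bot_iff_of_injective W φ.injective).1 h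
  · exact Subgroup.map_injective φ.injective
      (h.trans (Subgroup.map_top_of_surjective φ.toMonoidHom φ.surjective).symm)

end GEquiv

/-! ### Normal subgroups of quotients as `G`-groups -/

section NormalAct

variable {Q : Type*} [Group Q]

/-- The conjugation action of `G`, through `π : G →* Q`, on a normal subgroup `P` of `Q`; for
`P = socle Q` this is `socAct G π` definitionally. -/
def normalAct (π : G →* Q) (P : Subgroup Q) [P.Normal] : G →* MulAut P :=
  MulAut.conjNormal.comp π

@[simp]
theorem coe_normalAct_apply (π : G →* Q) (P : Subgroup Q) [P.Normal] (g : G) (p : P) :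
    (normalAct π P g p : Q) = π g * p * (π g)⁻¹ := rfl

theorem representsFactor_normalAct {π : G →* Q} {P : Subgroup Q} [P.Normal] {B : Subgroup G}
    (hP : B.map π = P) : RepresentsFactor G (normalAct π P) B (B ⊓ π.ker) := by
  subst hP
  refine ⟨π.subgroupMap B, π.subgroupMap_surjective B, fun b => ?_, fun g x y hxy => ?_⟩
  · rw [← Subtype.coe_inj]
    simp [MonoidHom.mem_ker]
  · ext
    simp [hxy]

end NormalAct

/-! ### Minimal normal subgroups -/

section MinimalNormal

variable {Q : Type*} [Group Q]

theorem IsMinimalNormal.le_of_not_disjoint {A N : Subgroup Q} [N.Normal]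
    (hA : IsMinimalNormal Q A) (h : ¬ Disjoint A N) : A ≤ N := by
  have := hA.1
  exact inf_eq_left.1 (hA.2.2 (A ⊓ N) inferInstance (mt disjoint_iff.2 h) inf_le_left)

theorem IsMinimalNormal.disjoint {A B : Subgroup Q} (hA : IsMinimalNormal Q A)
    (hB : IsMinimalNormal Q B) (hne : A ≠ B) : Disjoint A B := by
  have := hB.1
  by_contra h
  exact hne (hB.2.2 A hA.1 hA.2.1 (hA.le_of_not_disjoint h))

theorem IsMinimalNormal.map {R : Type*} [Group R] {f : Q →* R} (hf : Function.Surjective f)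
    {A : Subgroup Q} (hA : IsMinimalNormal Q A) (hne : A.map f ≠ ⊥) :
    IsMinimalNormal R (A.map f) := by
  refine ⟨hA.1.map f hf, hne, fun L hL hL_ne hLA => le_antisymm hLA ?_⟩
  have := hA.1
  refine Subgroup.map_le_iff_le_comap.2 (hA.le_of_not_disjoint fun hdisj => hL_ne ?_)
  refine (Subgroup.eq_bot_iff_forall L).2 fun x hx => ?_
  obtain ⟨y, hy, rfl⟩ := hLA hx
  rw [Subgroup.disjoint_def.1 hdisj hy hx, map_one]

theorem map_socle_le {R : Type*} [Group R] {f : Q →* R} (hf : Function.Surjective f) :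
    (socle Q).map f ≤ socle R := by
  rw [socle, Subgroup.map_le_iff_le_comap]
  refine sSup_le fun A hA => Subgroup.map_le_iff_le_comap.1 ?_
  rcases eq_or_ne (A.map f) ⊥ with h | h
  · simp [h]
  · exact le_sSup (hA.map hf h)

theorem isMinimalNormal_of_isIrreducibleGGroup {π : G →* Q} {P : Subgroup Q} [hP : P.Normal]
    (h : IsIrreducibleGGroup G (normalAct π P)) : IsMinimalNormal Q P := by
  refine ⟨hP, (Subgroup.nontrivial_iff_ne_bot P).1 h.1, fun L hL hL_ne hLP => ?_⟩
  have hinv (g : G) (v : P) (hv : v ∈ L.subgroupOf P) : normalAct π P g v ∈ L.subgroupOf P :=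
    hL.conj_mem _ hv _
  rcases h.2 (L.subgroupOf P) inferInstance hinv with h_bot | h_top
  · exact absurd ((Subgroup.subgroupOf_eq_bot.1 h_bot).eq_bot_of_le hLP) hL_ne
  · exact le_antisymm hLP (Subgroup.subgroupOf_eq_top.1 h_top)

theorem IsMinimalNormal.isChiefFactorPair {π : G →* Q} (hπ : Function.Surjective π)
    {B : Subgroup G} [hB : B.Normal] (h : IsMinimalNormal Q (B.map π)) :
    IsChiefFactorPair G B (B ⊓ π.ker) := by
  have hlt : B ⊓ π.ker < B :=
    inf_le_left.lt_of_ne fun heq => h.2.1 ((B.map_eq_bot_iff).2 (inf_eq_left.1 heq))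
  refine ⟨hB, inferInstance, hlt, fun L hL hkerL hLB => ?_⟩
  rcases eq_or_ne (L.map π) ⊥ with h_bot | h_ne
  · exact .inl (le_antisymm (le_inf hLB ((L.map_eq_bot_iff).1 h_bot)) hkerL)
  · right
    have hmap : B ≤ L ⊔ π.ker :=
      Subgroup.map_le_map_iff.1 (h.2.2 _ (hL.map π hπ) h_ne (Subgroup.map_mono hLB)).ge
    refine le_antisymm hLB fun b hb => ?_
    obtain ⟨l, hl, k, hk, rfl⟩ := Subgroup.mem_sup_of_normal_left.1 (hmap hb)
    exact L.mul_mem hl (hkerL ⟨(B.mul_mem_cancel_left (hLB hl)).1 hb, hk⟩)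

end MinimalNormal

/-! ### The crown -/

section Crown

variable {V : Type*} [Group V] {a : G →* MulAut V} {U N K : Subgroup G}

theorem map_mk'_le_socle_of_mem_crownNormals [N.Normal] (hN : N ∈ crownNormals a)
    (hU : U ≤ crownSocle a) : U.map (QuotientGroup.mk' N) ≤ socle (G ⧸ N) := by
  let f : G ⧸ crownRadical a →* G ⧸ N := QuotientGroup.map _ _ (MonoidHom.id G) (sInf_le hN)
  have hf : Function.Surjective f :=
    QuotientGroup.map_surjective_of_surjective _ _ _ QuotientGroup.mk_surjective _
  calc U.map (QuotientGroup.mk' N)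
      = (U.map (QuotientGroup.mk' (crownRadical a))).map f := by
        rw [Subgroup.map_map]
        rfl
    _ ≤ (socle (G ⧸ crownRadical a)).map f :=
        Subgroup.map_mono (Subgroup.map_le_iff_le_comap.2 hU)
    _ ≤ socle (G ⧸ N) := map_socle_le hf

theorem isMinimalNormal_socle_of_mem_crownNormals [N.Normal] (hirr : IsIrreducibleGGroup G a)
    (hN : N ∈ crownNormals a) : IsMinimalNormal (G ⧸ N) (socle (G ⧸ N)) := by
  obtain ⟨_, -, -, hV⟩ := hN
  exact isMinimalNormal_of_isIrreducibleGGroup (π := QuotientGroup.mk' N)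
    (hV.isIrreducibleGGroup hirr)

theorem inf_eq_inf_of_minimal_not_le [N.Normal] [K.Normal] {B : Subgroup G}
    (hB : Minimal (fun B : Subgroup G => B.Normal ∧ ¬ B ≤ K) B)
    (hBN : IsChiefFactorPair G B (B ⊓ N)) : B ⊓ N = B ⊓ K := by
  have := hB.prop.1
  have hN : B ⊓ N ≤ K := by
    by_contra h
    exact hBN.2.2.1.not_ge (hB.le_of_le ⟨inferInstance, h⟩ inf_le_left)
  have hle : B ⊓ N ≤ B ⊓ K := le_inf inf_le_left hN
  refine ((hBN.2.2.2 (B ⊓ K) inferInstance hle inf_le_left).resolve_right fun h => ?_).symm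
  exact hB.prop.2 (inf_eq_left.1 h)

/- A minimal `B` among the normal subgroups of `G` contained in `U` but not in `K` is also not
contained in some `N` defining the crown of `V`. Minimality gives `B ⊓ N = B ⊓ K`, so `BK/K` is
`G`-isomorphic to `BN/N = soc (G/N)`, hence `G`-equivalent to `V`. -/
theorem exists_normalAct_gEquiv [Finite G] [U.Normal] [K.Normal] (hirr : IsIrreducibleGGroup G a)
    (hU : U ≤ crownSocle a) (hR : crownRadical a ⊓ U ≤ K) (hUK : ¬ U ≤ K) :
    ∃ (A : Subgroup (G ⧸ K)) (_ : A.Normal), GEquiv G (normalAct (QuotientGroup.mk' K) A) a := by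
  obtain ⟨B, hBU, hB⟩ := (Set.toFinite {B : Subgroup G | B.Normal ∧ ¬ B ≤ K}).exists_le_minimal
    (a := U) ⟨inferInstance, hUK⟩
  have := hB.prop.1
  have hBR : ¬ B ≤ crownRadical a := fun h => hB.prop.2 ((le_inf h hBU).trans hR)
  obtain ⟨N, hN, hBN⟩ : ∃ N ∈ crownNormals a, ¬ B ≤ N := by
    simpa only [crownRadical, le_sInf_iff, not_forall, exists_prop] using hBR
  obtain ⟨_, -, -, hV⟩ := id hN
  have hsoc := isMinimalNormal_socle_of_mem_crownNormals hirr hN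
  have hmap : B.map (QuotientGroup.mk' N) = socle (G ⧸ N) := by
    refine hsoc.2.2 _ (this.map _ (QuotientGroup.mk'_surjective N)) (fun h => hBN ?_)
      (map_mk'_le_socle_of_mem_crownNormals hN (hBU.trans hU))
    simpa [Subgroup.map_eq_bot_iff] using h
  have hchief : IsChiefFactorPair G B (B ⊓ N) := by
    rw [← hmap] at hsoc
    simpa using hsoc.isChiefFactorPair (QuotientGroup.mk'_surjective N)
  have hinf : B ⊓ N = B ⊓ K := inf_eq_inf_of_minimal_not_le hB hchief
  have hA : (B.map (QuotientGroup.mk' K)).Normal := this.map _ (QuotientGroup.mk'_surjective K)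
  have hrepN := representsFactor_normalAct hmap
  have hrepK := representsFactor_normalAct (rfl : B.map (QuotientGroup.mk' K) = _)
  rw [QuotientGroup.ker_mk'] at hrepN hrepK
  exact ⟨_, hA, (hrepK.gIso (hinf ▸ hrepN)).gEquiv.trans hV⟩

end Crown

/-! ### Primitive groups -/

section Primitive

variable {Q : Type*} [Group Q] {M P P₁ P₂ : Subgroup Q}

theorem sup_eq_top_of_normalCore_eq_bot [P.Normal] (hM : IsCoatom M) (hcore : M.normalCore = ⊥)
    (hP : P ≠ ⊥) : P ⊔ M = ⊤ := by
  have hPM : ¬ P ≤ M := fun h => hP (eq_bot_iff.2 (hcore ▸ Subgroup.normal_le_normalCore.2 h))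
  exact hM.2 _ (right_lt_sup.2 hPM)

theorem disjoint_centralizer_of_normalCore_eq_bot [P.Normal] (hM : IsCoatom M)
    (hcore : M.normalCore = ⊥) (hP : P ≠ ⊥) : Disjoint (Subgroup.centralizer (P : Set Q)) M := by
  set D := Subgroup.centralizer (P : Set Q) ⊓ M with hD
  have hP_le : P ≤ Subgroup.normalizer (D : Set Q) :=
    (Subgroup.le_centralizer_iff.1 inf_le_left).trans (Subgroup.centralizer_le_normalizer _)
  have hM_le : M ≤ Subgroup.normalizer (D : Set Q) :=
    le_trans (le_inf (by simp [Subgroup.normalizer_eq_top]) M.le_normalizer)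
      Subgroup.inf_normalizer_le_normalizer_inf
  have hD_normal : D.Normal := by
    rw [← Subgroup.normalizer_eq_top_iff, ← top_le_iff,
      ← sup_eq_top_of_normalCore_eq_bot hM hcore hP]
    exact sup_le hP_le hM_le
  rw [disjoint_iff, ← hD, eq_bot_iff, ← hcore]
  exact Subgroup.normal_le_normalCore.2 inf_le_right

theorem le_centralizer_of_disjoint [P₁.Normal] [P₂.Normal] (h : Disjoint P₁ P₂) :
    P₂ ≤ Subgroup.centralizer (P₁ : Set Q) := fun q hq p hp =>
  Subgroup.commute_of_normal_of_disjoint P₁ P₂ inferInstance inferInstance h p q hp hq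

theorem isComplement'_of_normalCore_eq_bot [P₁.Normal] [P₂.Normal] (hM : IsCoatom M)
    (hcore : M.normalCore = ⊥) (h : Disjoint P₁ P₂) (h₁ : P₁ ≠ ⊥) (h₂ : P₂ ≠ ⊥) :
    P₂.IsComplement' M := by
  refine Subgroup.isComplement'_of_disjoint_and_mul_eq_univ ?_ ?_
  · exact (disjoint_centralizer_of_normalCore_eq_bot hM hcore h₁).mono_left
      (le_centralizer_of_disjoint h)
  · rw [← Subgroup.normal_mul, sup_eq_top_of_normalCore_eq_bot hM hcore h₂, Subgroup.coe_top]

theorem centralizer_eq_of_normalCore_eq_bot [P₁.Normal] [P₂.Normal] (hM : IsCoatom M)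
    (hcore : M.normalCore = ⊥) (h : Disjoint P₁ P₂) (h₁ : P₁ ≠ ⊥) (h₂ : P₂ ≠ ⊥) :
    Subgroup.centralizer (P₁ : Set Q) = P₂ := by
  refine le_antisymm (fun c hc => ?_) (le_centralizer_of_disjoint h)
  have hc_sup : c ∈ P₂ ⊔ M := sup_eq_top_of_normalCore_eq_bot hM hcore h₂ ▸ Subgroup.mem_top c
  obtain ⟨p, hp, m, hm, rfl⟩ := Subgroup.mem_sup_of_normal_left.1 hc_sup
  have hm_cent : m ∈ Subgroup.centralizer (P₁ : Set Q) :=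
    (Subgroup.mul_mem_cancel_left _ (le_centralizer_of_disjoint h hp)).1 hc
  rw [Subgroup.disjoint_def.1 (disjoint_centralizer_of_normalCore_eq_bot hM hcore h₁) hm_cent hm,
    mul_one]
  exact hp

theorem socle_eq_sup_of_normalCore_eq_bot (hM : IsCoatom M) (hcore : M.normalCore = ⊥)
    (h₁ : IsMinimalNormal Q P₁) (h₂ : IsMinimalNormal Q P₂) (hne : P₁ ≠ P₂) :
    socle Q = P₁ ⊔ P₂ := by
  refine le_antisymm (sSup_le fun P hP => ?_) (sup_le (le_sSup h₁) (le_sSup h₂))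
  have := h₁.1
  have := h₂.1
  have := hP.1
  rcases eq_or_ne P₁ P with rfl | hne_P
  · exact le_sup_left
  · rw [← centralizer_eq_of_normalCore_eq_bot hM hcore (h₁.disjoint h₂ hne) h₁.2.1 h₂.2.1]
    exact le_sup_of_le_right (le_centralizer_of_disjoint (h₁.disjoint hP hne_P))

theorem exists_mul_mem_iff_of_isComplement' (h : P.IsComplement' M) :
    ∃ β : Q → P, ∀ (x : Q) (p : P), (p : Q) * x ∈ M ↔ β x = p := by
  choose γ hγ huniq using Subgroup.isComplement_iff_existsUnique_inv_mul_mem.1 h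
  refine ⟨fun x => (γ x)⁻¹, fun x p => ⟨fun hp => ?_, ?_⟩⟩
  · exact inv_eq_iff_eq_inv.2 (huniq x p⁻¹ (by simpa using hp)).symm
  · rintro rfl
    exact hγ x

/- Let `β₂ x` be the element of `P₂` with `β₂ x * x ∈ M`. Restricted to `P₁` it is an isomorphism
onto `P₂`, with inverse the restriction of `β₁`, and `β₂ ∘ π` is a cocycle twisting it into a
`G`-equivalence. -/
theorem gEquiv_normalAct_of_isComplement' [P₁.Normal] [P₂.Normal] (π : G →* Q)
    (hdisj : Disjoint P₁ P₂) (h₁ : P₁.IsComplement' M) (h₂ : P₂.IsComplement' M) :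
    GEquiv G (normalAct π P₁) (normalAct π P₂) := by
  obtain ⟨β₁, hβ₁⟩ := exists_mul_mem_iff_of_isComplement' h₁
  obtain ⟨β₂, hβ₂⟩ := exists_mul_mem_iff_of_isComplement' h₂
  have hmem (x : Q) : (β₂ x : Q) * x ∈ M := (hβ₂ x _).2 rfl
  have hcomm (p : P₁) (q : P₂) : (p : Q) * q = q * p :=
    Subgroup.commute_of_normal_of_disjoint P₁ P₂ inferInstance inferInstance hdisj p q p.2 q.2
  let φ : P₁ ≃* P₂ :=
    { toFun := fun p => β₂ p
      invFun := fun q => β₁ q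
      left_inv := fun p => (hβ₁ _ _).1 (hcomm p _ ▸ hmem p)
      right_inv := fun q => (hβ₂ _ _).1 (hcomm _ q ▸ (hβ₁ q _).2 rfl)
      map_mul' := fun p q => (hβ₂ _ _).1 <| by
        have hmul := M.mul_mem (hmem p) (hmem q)
        rwa [mul_assoc, ← mul_assoc (p : Q), hcomm, mul_assoc, ← mul_assoc] at hmul }
  refine gEquiv_of_cocycle φ (fun g => β₂ (π g)) (fun g h => (hβ₂ _ _).1 ?_)
    fun g v => (hβ₂ _ _).1 ?_
  · have hmul := M.mul_mem (hmem (π g)) (hmem (π h))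
    simpa [mul_assoc] using hmul
  · have hconj := M.mul_mem (M.mul_mem (hmem (π g)) (hmem v)) (M.inv_mem (hmem (π g)))
    have hswap := hcomm (normalAct π P₁ g v) (β₂ (π g))⁻¹
    simp only [Subgroup.coe_mul]
    rw [mul_assoc _ _ (normalAct π P₁ g v : Q), ← hswap]
    simpa [φ, mul_assoc] using hconj

theorem gEquiv_prodAct_of_disjoint {V : Type*} [Group V] {a : G →* MulAut V} {π : G →* Q}
    {S : Subgroup Q} [S.Normal] [P₁.Normal] [P₂.Normal] (hS : P₁ ⊔ P₂ = S)
    (hdisj : Disjoint P₁ P₂) (h₁ : GEquiv G (normalAct π P₁) a)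
    (h₂ : GEquiv G (normalAct π P₂) a) : GEquiv G (normalAct π S) (prodAct G a) := by
  obtain ⟨φ₁, β₁, hβ₁, hφ₁⟩ := h₁.exists_cocycle
  obtain ⟨φ₂, β₂, hβ₂, hφ₂⟩ := h₂.exists_cocycle
  let f : P₁ × P₂ →* Q := P₁.subtype.noncommCoprod P₂.subtype fun p q =>
    Subgroup.commute_of_normal_of_disjoint P₁ P₂ inferInstance inferInstance hdisj p q p.2 q.2
  have hf_inj : Function.Injective f := (MonoidHom.noncommCoprod_injective _ _ _).2
    ⟨P₁.subtype_injective, P₂.subtype_injective, by simpa using hdisj⟩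
  have hf_range : f.range = S := (MonoidHom.noncommCoprod_range _ _ _).trans (by simpa using hS)
  let ψ : P₁ × P₂ ≃* S := (MonoidHom.ofInjective hf_inj).trans (MulEquiv.subgroupCongr hf_range)
  have hψ (g : G) (p : P₁ × P₂) :
      normalAct π S g (ψ p) = ψ (normalAct π P₁ g p.1, normalAct π P₂ g p.2) := by
    ext
    change π g * (p.1 * p.2) * (π g)⁻¹ = π g * p.1 * (π g)⁻¹ * (π g * p.2 * (π g)⁻¹)
    group
  refine gEquiv_of_cocycle (ψ.symm.trans (φ₁.prodCongr φ₂)) (fun g => (β₁ g, β₂ g))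
    (fun g h => Prod.ext (hβ₁ g h) (hβ₂ g h)) fun g v => ?_
  obtain ⟨p, rfl⟩ := ψ.surjective v
  rw [hψ]
  simp only [MulEquiv.trans_apply, MulEquiv.symm_apply_apply]
  exact Prod.ext (hφ₁ g p.1) (hφ₂ g p.2)

theorem socAct_gEquiv_or_gEquiv_prodAct {V : Type*} [Group V] {a : G →* MulAut V} {π : G →* Q}
    [P.Normal] (hM : IsCoatom M) (hcore : M.normalCore = ⊥) (hP : IsMinimalNormal Q P)
    (hPa : GEquiv G (normalAct π P) a) :
    GEquiv G (socAct G π) a ∨ GEquiv G (socAct G π) (prodAct G a) := by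
  by_cases hunique : ∀ C, IsMinimalNormal Q C → C = P
  · left
    obtain rfl : socle Q = P := le_antisymm (sSup_le fun C hC => (hunique C hC).le) (le_sSup hP)
    exact hPa
  · right
    push Not at hunique
    obtain ⟨C, hC, hne⟩ := hunique
    have := hC.1
    have hdisj := hC.disjoint hP hne
    have hCP : GEquiv G (normalAct π C) (normalAct π P) :=
      gEquiv_normalAct_of_isComplement' π hdisj
        (isComplement'_of_normalCore_eq_bot hM hcore hdisj.symm hP.2.1 hC.2.1)
        (isComplement'_of_normalCore_eq_bot hM hcore hdisj hC.2.1 hP.2.1)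
    exact gEquiv_prodAct_of_disjoint
      (socle_eq_sup_of_normalCore_eq_bot hM hcore hC hP hne).symm hdisj (hCP.trans hPa) hPa

end Primitive

/-! ### Maximal subgroups -/

section Maximal

variable {Q : Type*} [Group Q] {π : G →* Q} {M : Subgroup G}

theorem isCoatom_map_of_ker_le (hπ : Function.Surjective π) (hM : IsCoatom M) (hker : π.ker ≤ M) :
    IsCoatom (M.map π) := by
  refine ⟨fun h => hM.1 ?_, fun L hL => Subgroup.comap_injective hπ (hM.2 _ ?_)⟩
  · rw [← Subgroup.comap_map_eq_self hker, h, Subgroup.comap_top]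
  · rwa [← Subgroup.comap_lt_comap_of_surjective hπ, Subgroup.comap_map_eq_self hker] at hL

theorem normalCore_map_eq_bot (hπ : Function.Surjective π) (hker : π.ker = M.normalCore) :
    (M.map π).normalCore = ⊥ := by
  have hle : (M.map π).normalCore.comap π ≤ M :=
    (Subgroup.comap_mono (Subgroup.normalCore_le _)).trans
      (Subgroup.comap_map_eq_self (hker.trans_le M.normalCore_le)).le
  refine Subgroup.comap_injective hπ (le_antisymm ?_ (Subgroup.comap_mono bot_le))
  rw [MonoidHom.comap_bot, hker]
  exact Subgroup.normal_le_normalCore.2 hle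

theorem socAct_mk'_normalCore_gEquiv_or_gEquiv_prodAct [Finite G] {V : Type*} [Group V]
    {a : G →* MulAut V} {U : Subgroup G} [U.Normal] (hirr : IsIrreducibleGGroup G a)
    (hU : U ≤ crownSocle a) (hR : crownRadical a ⊓ U ≤ M) (hM : IsCoatom M) (hUM : ¬ U ≤ M) :
    GEquiv G (socAct G (QuotientGroup.mk' M.normalCore)) a ∨
      GEquiv G (socAct G (QuotientGroup.mk' M.normalCore)) (prodAct G a) := by
  have hπ := QuotientGroup.mk'_surjective M.normalCore
  have hker := QuotientGroup.ker_mk' M.normalCore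
  obtain ⟨A, _, hA⟩ := exists_normalAct_gEquiv hirr hU (Subgroup.normal_le_normalCore.2 hR)
    (mt (fun h => h.trans M.normalCore_le) hUM)
  exact socAct_gEquiv_or_gEquiv_prodAct
    (isCoatom_map_of_ker_le hπ hM (hker.trans_le M.normalCore_le))
    (normalCore_map_eq_bot hπ hker)
    (isMinimalNormal_of_isIrreducibleGGroup (hA.isIrreducibleGGroup hirr)) hA

end Maximal

/-! ### Uniform probability -/

section UniformProb

variable {α : Type*}

/-- The probability that a uniformly random element of the finite type `α` lies in `s`. -/
noncomputable def uniformProb (s : Set α) : ℝ := s.ncard / Nat.card α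

theorem uniformProb_nonneg (s : Set α) : 0 ≤ uniformProb s := by
  unfold uniformProb
  positivity

theorem uniformProb_mono [Finite α] {s t : Set α} (h : s ⊆ t) : uniformProb s ≤ uniformProb t := by
  unfold uniformProb
  gcongr
  exact t.toFinite

theorem uniformProb_union_le (s t : Set α) :
    uniformProb (s ∪ t) ≤ uniformProb s + uniformProb t := by
  unfold uniformProb
  rw [← add_div]
  gcongr
  exact_mod_cast Set.ncard_union_le s t

theorem uniformProb_iUnion_le {ι : Type*} [Fintype ι] (s : ι → Set α) :
    uniformProb (⋃ i, s i) ≤ ∑ i, uniformProb (s i) := by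
  unfold uniformProb
  rw [← Finset.sum_div]
  gcongr
  exact_mod_cast Set.ncard_iUnion_le_of_fintype s

theorem uniformProb_compl [Finite α] [Nonempty α] (s : Set α) :
    uniformProb sᶜ = 1 - uniformProb s := by
  have hcard : (s.ncard : ℝ) + sᶜ.ncard = Nat.card α := by
    exact_mod_cast Set.ncard_add_ncard_compl s
  have hpos : (Nat.card α : ℝ) ≠ 0 := by exact_mod_cast Nat.card_pos.ne'
  unfold uniformProb
  field_simp
  linarith

theorem uniformProb_lt_one [Finite α] {s : Set α} (hs : s ≠ Set.univ) : uniformProb s < 1 := by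
  obtain ⟨x, -⟩ := (Set.ne_univ_iff_exists_notMem s).1 hs
  have : Nonempty α := ⟨x⟩
  unfold uniformProb
  rw [div_lt_one (by exact_mod_cast Nat.card_pos), ← Set.ncard_univ]
  exact_mod_cast Set.ncard_lt_ncard (Set.ssubset_univ_iff.2 hs)

theorem uniformProb_fin_eq {k : ℕ} (s : Set (Fin k → α)) :
    uniformProb s = s.ncard / (Nat.card α : ℝ) ^ k := by
  simp [uniformProb, Nat.card_fun]

theorem uniformProb_forall_mem {k : ℕ} (s : Set α) :
    uniformProb {f : Fin k → α | ∀ i, f i ∈ s} = uniformProb s ^ k := by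
  have hcard : {f : Fin k → α | ∀ i, f i ∈ s}.ncard = s.ncard ^ k :=
    (Nat.card_congr (Equiv.subtypePiEquivPi (p := fun _ x => x ∈ s))).trans (by
      simp [Nat.card_fun])
  rw [uniformProb_fin_eq, hcard, uniformProb, div_pow, Nat.cast_pow]

theorem ncard_preimage_of_surjective {H : Type*} [Group H] {f : G →* H}
    (hf : Function.Surjective f) (s : Set H) :
    (f ⁻¹' s).ncard = s.ncard * Nat.card f.ker := by
  let e : f ⁻¹' s ≃ s × f.ker :=
    (Equiv.sigmaSubtypeFiberEquivSubtype f fun _ => Iff.rfl).symm.trans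
      ((Equiv.sigmaCongrRight fun y : s => MonoidHom.fiberEquivKerOfSurjective hf y).trans
        (Equiv.sigmaEquivProd _ _))
  exact (Nat.card_congr e).trans (Nat.card_prod _ _)

theorem uniformProb_preimage_of_surjective {H : Type*} [Group H] {f : G →* H} [Finite f.ker]
    (hf : Function.Surjective f) (s : Set H) : uniformProb (f ⁻¹' s) = uniformProb s := by
  have hcard : Nat.card G = Nat.card H * Nat.card f.ker := by
    simpa [Set.ncard_univ] using ncard_preimage_of_surjective hf Set.univ
  have hker : (Nat.card f.ker : ℝ) ≠ 0 := by exact_mod_cast Nat.card_pos.ne'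
  rw [uniformProb, uniformProb, ncard_preimage_of_surjective hf, hcard, Nat.cast_mul, Nat.cast_mul,
    mul_div_mul_right _ _ hker]

end UniformProb

/-! ### Conjugates of a proper subgroup -/

/- Burnside: the average number of fixed points over `G` is the number of orbits, which is one,
while the identity fixes at least two points. -/
theorem exists_fixedBy_eq_empty {X : Type*} [MulAction G X] [Finite G]
    [MulAction.IsPretransitive G X] [Nontrivial X] : ∃ g : G, MulAction.fixedBy X g = ∅ := by
  classical
  have : Finite X := Finite.of_surjective (fun g : G => g • Classical.arbitrary X)
    (MulAction.surjective_smul G _)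
  have := Fintype.ofFinite G
  have := Fintype.ofFinite X
  by_contra! hfixed
  have horbit : Fintype.card (Quotient (MulAction.orbitRel G X)) = 1 := by
    have := (MulAction.pretransitive_iff_subsingleton_quotient G X).1 inferInstance
    exact Fintype.card_eq_one_iff.2
      ⟨Quotient.mk'' (Classical.arbitrary X), fun _ => Subsingleton.elim _ _⟩
  have hburnside : ∑ g : G, Fintype.card (MulAction.fixedBy X g) = Fintype.card G := by
    rw [MulAction.sum_card_fixedBy_eq_card_orbits_mul_card_group, horbit, one_mul]
  have hone : 1 < Fintype.card (MulAction.fixedBy X (1 : G)) := by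
    simpa [MulAction.fixedBy_one_eq_univ] using Fintype.one_lt_card (α := X)
  have hlt : ∑ _g : G, 1 < ∑ g : G, Fintype.card (MulAction.fixedBy X g) :=
    Finset.sum_lt_sum (fun g _ => Fintype.card_pos_iff.2 (hfixed g).to_subtype)
      ⟨1, Finset.mem_univ _, hone⟩
  rw [hburnside] at hlt
  simp at hlt

theorem exists_forall_conj_notMem [Finite G] {M : Subgroup G} (hM : M ≠ ⊤) :
    ∃ g : G, ∀ x : G, x * g * x⁻¹ ∉ M := by
  have := QuotientGroup.nontrivial_iff.2 hM
  obtain ⟨g, hg⟩ := exists_fixedBy_eq_empty (G := G) (X := G ⧸ M)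
  refine ⟨g, fun x hx => Set.eq_empty_iff_forall_notMem.1 hg (x⁻¹ : G) ?_⟩
  rw [MulAction.mem_fixedBy, MulAction.Quotient.smul_coe, QuotientGroup.eq]
  simpa [mul_assoc] using M.inv_mem hx

/-! ### Invariable generation -/

section InvGen

variable {V : Type*} [Group V] {k : ℕ}

theorem not_invGen_iff [IsCoatomic (Subgroup G)] {f : Fin k → G} :
    ¬ InvGen G f ↔ ∃ M : Subgroup G, IsCoatom M ∧ ∀ i, ∃ x : G, x * f i * x⁻¹ ∈ M := by
  unfold InvGen
  push Not
  refine ⟨fun ⟨c, hc⟩ => ?_, fun ⟨M, hM, h⟩ => ?_⟩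
  · obtain ⟨M, hM, hle⟩ := (eq_top_or_exists_le_coatom _).resolve_left hc
    exact ⟨M, hM, fun i => ⟨c i, hle (Subgroup.subset_closure ⟨i, rfl⟩)⟩⟩
  · choose c hc using h
    refine ⟨c, fun htop => hM.1 (top_le_iff.1 ?_)⟩
    rw [← htop, Subgroup.closure_le]
    exact Set.range_subset_iff.2 hc

theorem one_sub_probInvGen_eq [Finite G] :
    1 - probInvGen G k = uniformProb {f : Fin k → G | ¬ InvGen G f} := by
  rw [← Set.compl_ofPred, uniformProb_compl, uniformProb_fin_eq]
  rfl

theorem pStar_eq_uniformProb (a : G →* MulAut V) :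
    pStar a k = uniformProb {f : Fin k → G | SatisfyVProperty a f} :=
  (uniformProb_fin_eq _).symm

/- The failure probability is dominated by a finite sum of geometric series, one for each maximal
subgroup `M`, with ratio the proportion of `G` covered by the conjugates of `M`. -/
theorem summable_one_sub_probInvGen (G : Type*) [Group G] [Finite G] :
    Summable fun k => 1 - probInvGen G k := by
  let := Fintype.ofFinite {M : Subgroup G // IsCoatom M}
  let conjugates (M : Subgroup G) : Set G := {g | ∃ x : G, x * g * x⁻¹ ∈ M}
  have hlt (M : {M : Subgroup G // IsCoatom M}) : uniformProb (conjugates M) < 1 := by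
    obtain ⟨g, hg⟩ := exists_forall_conj_notMem M.2.1
    exact uniformProb_lt_one ((Set.ne_univ_iff_exists_notMem _).2 ⟨g, not_exists.2 hg⟩)
  have hle (k : ℕ) : 1 - probInvGen G k ≤
      ∑ M : {M : Subgroup G // IsCoatom M}, uniformProb (conjugates M) ^ k := by
    simp only [one_sub_probInvGen_eq, ← uniformProb_forall_mem]
    refine (uniformProb_mono fun f hf => ?_).trans (uniformProb_iUnion_le _)
    obtain ⟨M, hM, h⟩ := not_invGen_iff.1 hf
    exact Set.mem_iUnion.2 ⟨⟨M, hM⟩, h⟩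
  refine .of_nonneg_of_le (fun k => one_sub_probInvGen_eq (G := G) ▸ uniformProb_nonneg _) hle ?_
  exact summable_sum fun M _ => summable_geometric_of_lt_one (uniformProb_nonneg _) (hlt M)

theorem summable_pStar [Finite G] (a : G →* MulAut V) : Summable fun k => pStar a k := by
  refine .of_nonneg_of_le (fun k => ?_) (fun k => ?_) (summable_one_sub_probInvGen G)
  · exact pStar_eq_uniformProb a ▸ uniformProb_nonneg _
  · rw [pStar_eq_uniformProb, one_sub_probInvGen_eq]
    exact uniformProb_mono fun f ⟨M, hM, _, h⟩ => not_invGen_iff.2 ⟨M, hM, h⟩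

variable {a : G →* MulAut V} {U : Subgroup G} [U.Normal] [Finite G]

theorem not_invGen_mk'_or_satisfyVProperty (hirr : IsIrreducibleGGroup G a)
    (hU : U ≤ crownSocle a) (hR : crownRadical a ⊓ U ≤ frattini G) {f : Fin k → G}
    (hf : ¬ InvGen G f) :
    ¬ InvGen (G ⧸ U) (QuotientGroup.mk' U ∘ f) ∨ SatisfyVProperty a f := by
  obtain ⟨M, hM, h⟩ := not_invGen_iff.1 hf
  by_cases hUM : U ≤ M
  · refine .inl (not_invGen_iff.2 ⟨M.map (QuotientGroup.mk' U), ?_, fun i => ?_⟩)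
    · exact isCoatom_map_of_ker_le (QuotientGroup.mk'_surjective U) hM (by simpa using hUM)
    · obtain ⟨x, hx⟩ := h i
      exact ⟨x, _, hx, rfl⟩
  · have hRM : crownRadical a ⊓ U ≤ M := hR.trans (frattini_le_coatom hM)
    exact .inr ⟨M, hM, socAct_mk'_normalCore_gEquiv_or_gEquiv_prodAct hirr hU hRM hM hUM, h⟩

theorem one_sub_probInvGen_le (hirr : IsIrreducibleGGroup G a)
    (hU : U ≤ crownSocle a) (hR : crownRadical a ⊓ U ≤ frattini G) (k : ℕ) :
    1 - probInvGen G k ≤ (1 - probInvGen (G ⧸ U) k) + pStar a k := by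
  let π : (Fin k → G) →* (Fin k → G ⧸ U) := (QuotientGroup.mk' U).compLeft (Fin k)
  have hπ : Function.Surjective π := (QuotientGroup.mk'_surjective U).comp_left
  rw [one_sub_probInvGen_eq, one_sub_probInvGen_eq, pStar_eq_uniformProb,
    ← uniformProb_preimage_of_surjective hπ]
  exact (uniformProb_mono fun f hf => not_invGen_mk'_or_satisfyVProperty hirr hU hR hf).trans
    (uniformProb_union_le _ _)

end InvGen

theorem chebotarev_le_quotient_add_pStar_general {G : Type*} [Group G] [Finite G]
    {V : Type*} [Group V] {a : G →* MulAut V} (hirr : IsIrreducibleGGroup G a)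
    {U : Subgroup G} [U.Normal] (hU : U ≤ crownSocle a)
    (hR : crownRadical a ⊓ U ≤ frattini G) :
    cheb G ≤ cheb (G ⧸ U) + ∑' k : ℕ, pStar a k := by
  have hG := summable_one_sub_probInvGen G
  have hQ := summable_one_sub_probInvGen (G ⧸ U)
  have hV := summable_pStar a
  calc cheb G ≤ ∑' k, ((1 - probInvGen (G ⧸ U) k) + pStar a k) :=
        hG.tsum_le_tsum (one_sub_probInvGen_le hirr hU hR) (hQ.add hV)
    _ = cheb (G ⧸ U) + ∑' k, pStar a k := hQ.tsum_add hV

/-- **Proposition 3.3(2)**: if `G` is a finite group with trivial Frattini subgroup and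
`U`, `V` are as in Lemma 2.1 (`I_G(V) = R_G(V) × U`), then
`C(G) ≤ C(G/U) + Σ_{k≥0} P*_{G,V}(k)`. -/
theorem chebotarev_le_quotient_add_pStar (G : Type) [Group G] [Finite G]
    (hfrat : frattini G = ⊥)
    (V : Type) [Group V] (a : G →* MulAut V) (X Y : Subgroup G)
    (hchief : IsChiefFactorPair G X Y) (hrep : RepresentsFactor G a X Y)
    (U : Subgroup G) [U.Normal] (hUne : U ≠ ⊥)
    (hcrown : crownSocle a = crownRadical a ⊔ U ∧ crownRadical a ⊓ U = ⊥) :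
    cheb G ≤ cheb (G ⧸ U) + ∑' k : ℕ, pStar a k := by
  exact chebotarev_le_quotient_add_pStar_general (hrep.isIrreducibleGGroup hchief)
    (hcrown.1 ▸ le_sup_right) (hcrown.2.trans_le bot_le)

end ChebotarevPaper
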